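/- arXiv:1102.1346 — 2 statements merged into one kernel-verified Lean document; each statement's English description precedes it below -/
import Mathlib

section
/- Let (a_n) be a non-degenerate recurrent sequence with values in a number field K that is not identically zero. Then a_n = 0 for only finitely many n. -/
open Polynomial

/-!
For all but finitely many primes `p`, every embedding into `ℂ_p` sends the roots to units. They lie
in a finite extension of `ℚ_p`, which is locally compact, so some `N > 0` brings every `α i ^ N`
close enough to `1` to be an exponential; hence, along each residue class mod `N`, the sequence
interpolates to an analytic function on `ℤ_p`. Infinitely many zeros accumulate in the compact
`ℤ_p`, so by the identity theorem this function vanishes on a ball, and the sequence vanishes along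
an arithmetic progression of some step `k`. Non-degeneracy keeps the `α i ^ k` distinct, and nonzero
sequences `n ↦ B(n) γ ^ n` with distinct `γ` are linearly independent, being generalized
eigenvectors of the shift; so all the coefficients vanish.
-/

open Filter Function Metric NormedSpace
open scoped Topology fwdDiff

section GeneralizedPowerSum

variable {ι R S : Type*} [CommRing R] [CommRing S]

/-- The generalized power sum `n ↦ ∑ i, A i (n) * α i ^ n`, the closed form of a linear recurrent
sequence. The roots `α i` may coincide or vanish, so that these sums are preserved by ring
homomorphisms and by restriction to arithmetic progressions. -/
def generalizedPowerSum [Fintype ι] (A : ι → R[X]) (α : ι → R) (n : ℕ) : R :=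
  ∑ i, (A i).eval (n : R) * α i ^ n

theorem map_generalizedPowerSum [Fintype ι] (ψ : R →+* S) (A : ι → R[X]) (α : ι → R) (n : ℕ) :
    ψ (generalizedPowerSum A α n) =
      generalizedPowerSum (fun i ↦ (A i).map ψ) (fun i ↦ ψ (α i)) n := by
  simp only [generalizedPowerSum, map_sum, map_mul, map_pow, eval_natCast_map]

theorem generalizedPowerSum_add_mul [Fintype ι] (A : ι → R[X]) (α : ι → R) (r k n : ℕ) :
    generalizedPowerSum A α (r + k * n) =
      generalizedPowerSum (fun i ↦ C (α i ^ r) * (A i).comp (C (k : R) * X + C (r : R)))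
        (fun i ↦ α i ^ k) n := by
  refine Finset.sum_congr rfl fun i _ ↦ ?_
  simp only [eval_mul, eval_C, eval_comp, eval_add, eval_X, Nat.cast_add, Nat.cast_mul, pow_add,
    pow_mul, add_comm (r : R)]
  ring

theorem shift_sub_smul_pow_apply (f : R → R) (γ : R) (k : ℕ) :
    ((LinearMap.funLeft R R (· + 1 : ℕ → ℕ) - γ • 1) ^ k) (fun n ↦ f n * γ ^ n) =
      fun n : ℕ ↦ (Δ_[1])^[k] f n * γ ^ (n + k) := by
  induction k with
  | zero => simp
  | succ k ih =>
    rw [pow_succ', Module.End.mul_apply, ih, iterate_succ_apply']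
    funext n
    simp only [LinearMap.sub_apply, LinearMap.smul_apply, Module.End.one_apply, Pi.sub_apply,
      Pi.smul_apply, LinearMap.funLeft_apply, fwdDiff, smul_eq_mul, Nat.cast_add, Nat.cast_one]
    ring

theorem eval_mul_pow_mem_maxGenEigenspace_shift (B : R[X]) (γ : R) :
    (fun n : ℕ ↦ B.eval (n : R) * γ ^ n) ∈
      Module.End.maxGenEigenspace (LinearMap.funLeft R R (· + 1 : ℕ → ℕ)) γ := by
  refine Module.End.mem_maxGenEigenspace _ _ _ |>.2 ⟨B.natDegree + 1, ?_⟩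
  refine (shift_sub_smul_pow_apply B.eval γ _).trans ?_
  rw [B.fwdDiff_iter_degree_add_one_eq_zero]
  exact funext fun n ↦ zero_mul _

theorem eq_zero_of_forall_eval_natCast_eq_zero [IsDomain R] [CharZero R] {B : R[X]}
    (h : ∀ n : ℕ, B.eval (n : R) = 0) : B = 0 :=
  eq_zero_of_infinite_isRoot B <|
    (Set.infinite_range_of_injective Nat.cast_injective).mono (Set.range_subset_iff.2 h)

theorem eq_zero_of_generalizedPowerSum_eq_zero [IsDomain R] [CharZero R] [Fintype ι]
    {A : ι → R[X]} {α : ι → R} (hinj : Injective α) (hα : ∀ i, α i ≠ 0)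
    (h : ∀ n, generalizedPowerSum A α n = 0) : A = 0 := by
  have hindep := (Module.End.independent_maxGenEigenspace
    (LinearMap.funLeft R R (· + 1 : ℕ → ℕ))).comp hinj
  have hterm := (iSupIndep_iff_finsetSum_eq_zero_imp_eq_zero _).1 hindep Finset.univ
    (fun i n ↦ (A i).eval (n : R) * α i ^ n)
    (fun i _ ↦ eval_mul_pow_mem_maxGenEigenspace_shift (A i) (α i))
    (funext fun n ↦ (Finset.sum_apply n _ _).trans (h n))
  funext i
  refine eq_zero_of_forall_eval_natCast_eq_zero fun n ↦ ?_
  exact (mul_eq_zero.1 (congrFun (hterm i (Finset.mem_univ i)) n)).resolve_right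
    (pow_ne_zero n (hα i))

theorem eq_zero_of_generalizedPowerSum_progression_eq_zero [IsDomain R] [CharZero R] [Fintype ι]
    {A : ι → R[X]} {α : ι → R} {r k : ℕ} (hk : k ≠ 0) (hinj : Injective fun i ↦ α i ^ k)
    (hα : ∀ i, α i ≠ 0) (h : ∀ n, generalizedPowerSum A α (r + k * n) = 0) : A = 0 := by
  have hzero := eq_zero_of_generalizedPowerSum_eq_zero hinj (fun i ↦ pow_ne_zero k (hα i))
    fun n ↦ (generalizedPowerSum_add_mul A α r k n).symm.trans (h n)
  have hdeg : (C (k : R) * X + C (r : R)).natDegree ≠ 0 := by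
    rw [natDegree_linear (Nat.cast_ne_zero.2 hk)]
    exact one_ne_zero
  funext i
  have hcomp := (mul_eq_zero.1 (congrFun hzero i)).resolve_left
    (C_ne_zero.2 (pow_ne_zero r (hα i)))
  exact (comp_eq_zero_iff.1 hcomp).resolve_right fun hconst ↦
    hdeg (hconst.2 ▸ natDegree_C _)

end GeneralizedPowerSum

section Recurrence

variable {ι : Type*}

theorem frequently_forall_pow_mem_of_properSpace [Finite ι] {L : Type*} [NormedField L]
    [ProperSpace L] {x : ι → L} (hx : ∀ i, ‖x i‖ = 1) {U : Set L} (hU : U ∈ 𝓝 1) :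
    ∃ᶠ N : ℕ in atTop, ∀ i, x i ^ N ∈ U := by
  let y : ι → sphere (0 : L) 1 := fun i ↦ ⟨x i, mem_sphere_zero_iff_norm.2 (hx i)⟩
  have hnhds : ∀ᶠ z : ι → sphere (0 : L) 1 in 𝓝 1, ∀ i, (z i : L) ∈ U :=
    eventually_all.2 fun i ↦
      (continuous_subtype_val.comp (continuous_apply i)).continuousAt.eventually_mem hU
  exact (mapClusterPt_one_atTop_pow y).frequently hnhds

theorem frequently_forall_pow_mem_of_isAlgebraic [Finite ι] (𝕜 : Type*) {L : Type*}
    [NontriviallyNormedField 𝕜] [CompleteSpace 𝕜] [LocallyCompactSpace 𝕜] [NormedField L]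
    [NormedAlgebra 𝕜 L] [Algebra.IsAlgebraic 𝕜 L] {x : ι → L} (hx : ∀ i, ‖x i‖ = 1) {U : Set L}
    (hU : U ∈ 𝓝 1) : ∃ᶠ N : ℕ in atTop, ∀ i, x i ^ N ∈ U := by
  let F := IntermediateField.adjoin 𝕜 (Set.range x)
  have : FiniteDimensional 𝕜 F := IntermediateField.finiteDimensional_adjoin fun y _ ↦
    Algebra.IsIntegral.isIntegral y
  have : ProperSpace F := FiniteDimensional.proper 𝕜 F
  let y : ι → F := fun i ↦ ⟨x i, IntermediateField.subset_adjoin 𝕜 _ (Set.mem_range_self i)⟩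
  exact frequently_forall_pow_mem_of_properSpace (x := y) hx
    (continuous_subtype_val.continuousAt.preimage_mem_nhds hU)

theorem exists_infinite_residue_class {S : Set ℕ} (hS : S.Infinite) {N : ℕ} (hN : 0 < N) :
    ∃ r, {n | r + N * n ∈ S}.Infinite := by
  by_contra! hfin
  refine hS (((Set.finite_lt_nat N).biUnion fun r _ ↦ (hfin r).image (r + N * ·)).subset ?_)
  intro n hn
  refine Set.mem_biUnion (Nat.mod_lt n hN) ⟨n / N, ?_, Nat.mod_add_div n N⟩
  rwa [Set.mem_ofPred_eq, Nat.mod_add_div]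

end Recurrence

section Exponential

variable {𝕜 𝔸 : Type*} [NontriviallyNormedField 𝕜]

theorem eventually_nhds_one_exists_exp_eq [CharZero 𝕜] [NormedRing 𝔸] [NormedAlgebra 𝕜 𝔸]
    [CompleteSpace 𝔸] (hr : 0 < (expSeries 𝕜 𝔸).radius) :
    ∀ᶠ x in 𝓝 (1 : 𝔸), ∃ l ∈ eball (0 : 𝔸) (expSeries 𝕜 𝔸).radius, exp l = x := by
  have hmap : map exp (𝓝 (0 : 𝔸)) = 𝓝 1 := by
    rw [(hasStrictFDerivAt_exp_zero_of_radius_pos hr).map_nhds_eq_of_surj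
      (LinearMap.range_eq_top.2 surjective_id), exp_zero]
  rw [← hmap]
  exact image_mem_map (eball_mem_nhds 0 hr)

theorem smul_mem_eball_zero [NormedRing 𝔸] [NormedAlgebra 𝕜 𝔸] {ρ : ENNReal} {l : 𝔸}
    (hl : l ∈ eball (0 : 𝔸) ρ) {z : 𝕜} (hz : ‖z‖ ≤ 1) : z • l ∈ eball (0 : 𝔸) ρ := by
  rw [mem_eball, edist_zero_right] at hl ⊢
  refine lt_of_le_of_lt (enorm_le_iff_norm_le.2 ?_) hl
  exact (norm_smul_le z l).trans (mul_le_of_le_one_left (norm_nonneg l) hz)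

end Exponential

section PadicInterpolation

variable (p : ℕ) [Fact p.Prime]

theorem padic_norm_inv_factorial_le (n : ℕ) : ‖(n.factorial : ℚ_[p])⁻¹‖ ≤ (p : ℝ) ^ n := by
  have hp : (1 : ℝ) ≤ p := mod_cast (Fact.out : p.Prime).one_le
  rw [norm_inv, Padic.norm_eq_zpow_neg_valuation (Nat.cast_ne_zero.2 n.factorial_ne_zero),
    Padic.valuation_natCast, zpow_neg, inv_inv, zpow_natCast]
  exact pow_le_pow_right₀ hp (padicValNat_factorial_le p n)

theorem padic_expSeries_radius_pos (E : Type*) [NormedRing E] [NormOneClass E]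
    [NormedAlgebra ℚ_[p] E] : 0 < (expSeries ℚ_[p] E).radius := by
  have hp : 0 < (p : NNReal) := mod_cast (Fact.out : p.Prime).pos
  refine (ENNReal.coe_pos.2 (inv_pos.2 hp)).trans_le
    (FormalMultilinearSeries.le_radius_of_bound _ 1 fun n ↦ ?_)
  rw [expSeries, norm_smul, ContinuousMultilinearMap.norm_mkPiAlgebraFin, mul_one,
    NNReal.coe_inv, NNReal.coe_natCast, inv_pow, ← div_eq_mul_inv]
  exact div_le_one_of_le₀ (padic_norm_inv_factorial_le p n) (by positivity)

variable {p} in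
theorem exists_forall_add_natCast_mul_mem_of_mem_nhds {U : Set ℚ_[p]} {z : ℚ_[p]} (hU : U ∈ 𝓝 z) :
    ∃ k : ℕ, 0 < k ∧ ∀ n : ℕ, z + (k * n : ℕ) ∈ U := by
  obtain ⟨δ, hδ, hball⟩ := Metric.mem_nhds_iff.1 hU
  obtain ⟨M, hM⟩ := exists_pow_lt_of_lt_one hδ (Padic.norm_p_lt_one (p := p))
  refine ⟨p ^ M, pow_pos (Fact.out : p.Prime).pos M, fun n ↦ hball ?_⟩
  rw [mem_ball_iff_norm, add_sub_cancel_left, Nat.cast_mul, Nat.cast_pow, norm_mul, norm_pow]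
  exact (mul_le_of_le_one_right (by positivity)
    (IsUltrametricDist.norm_natCast_le_one _ n)).trans_lt hM

/-- The sequence `u` is the restriction to `ℕ` of a function that is analytic at every point of
`ℤ_p`, the closed unit ball of `ℚ_p`. -/
def HasPadicInterpolation {E : Type*} [NormedAddCommGroup E] [NormedSpace ℚ_[p] E]
    (u : ℕ → E) : Prop :=
  ∃ f : ℚ_[p] → E, AnalyticOnNhd ℚ_[p] f (closedBall 0 1) ∧ ∀ n : ℕ, f n = u n

namespace HasPadicInterpolation

variable {p} {E ι : Type*}

theorem exists_progression_eq_zero [NormedAddCommGroup E] [NormedSpace ℚ_[p] E] {u : ℕ → E}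
    (hu : HasPadicInterpolation p u) (hzeros : {n | u n = 0}.Infinite) :
    ∃ m k, 0 < k ∧ ∀ n, u (m + k * n) = 0 := by
  obtain ⟨f, hf, hfu⟩ := hu
  obtain ⟨z, hz, hacc⟩ := (hzeros.image (f := ((↑) : ℕ → ℚ_[p]))
    Nat.cast_injective.injOn).exists_accPt_of_subset_isCompact (isCompact_closedBall 0 1)
    (Set.image_subset_iff.2 fun n _ ↦
      mem_closedBall_zero_iff.2 (IsUltrametricDist.norm_natCast_le_one _ n))
  have hfreq := accPt_iff_frequently_nhdsNE.1 hacc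
  have hnear : ∀ᶠ w in 𝓝 z, f w = 0 := by
    refine (hf z hz).frequently_zero_iff_eventually_zero.1 (hfreq.mono ?_)
    rintro _ ⟨n, hn, rfl⟩
    exact (hfu n).trans hn
  obtain ⟨_, ⟨m, -, rfl⟩, hm⟩ :=
    (hfreq.and_eventually (nhdsWithin_le_nhds hnear.eventually_nhds)).exists
  obtain ⟨k, hk, hmk⟩ := exists_forall_add_natCast_mul_mem_of_mem_nhds hm
  refine ⟨m, k, hk, fun n ↦ ?_⟩
  rw [← hfu, Nat.cast_add]
  exact hmk n

variable [NormedCommRing E] [NormedAlgebra ℚ_[p] E]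

theorem eval_mul {u : ℕ → E} (hu : HasPadicInterpolation p u) (B : E[X]) :
    HasPadicInterpolation p fun n ↦ B.eval (n : E) * u n := by
  obtain ⟨f, hf, hfu⟩ := hu
  refine ⟨fun z ↦ aeval (algebraMap ℚ_[p] E z) B * f z, fun z hz ↦ ?_, fun n ↦ ?_⟩
  · exact (((algebraMapCLM ℚ_[p] E).analyticAt z).aeval_polynomial B).mul (hf z hz)
  · simp only [hfu, map_natCast, coe_aeval_eq_eval]

theorem finsetSum {s : Finset ι} {u : ι → ℕ → E}
    (hu : ∀ i, HasPadicInterpolation p (u i)) :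
    HasPadicInterpolation p fun n ↦ ∑ i ∈ s, u i n := by
  choose f hf hfu using hu
  exact ⟨fun z ↦ ∑ i ∈ s, f i z, fun z hz ↦ s.analyticAt_fun_sum fun i _ ↦ hf i z hz,
    fun n ↦ Finset.sum_congr rfl fun i _ ↦ hfu i n⟩

theorem generalizedPowerSum [Fintype ι] (A : ι → E[X]) {α : ι → E}
    (hα : ∀ i, HasPadicInterpolation p (α i ^ ·)) :
    HasPadicInterpolation p (generalizedPowerSum A α) :=
  finsetSum fun i ↦ (hα i).eval_mul (A i)

theorem exp_pow [CompleteSpace E] {l : E}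
    (hl : l ∈ eball (0 : E) (expSeries ℚ_[p] E).radius) : HasPadicInterpolation p (exp l ^ ·) := by
  have hball {z : ℚ_[p]} (hz : ‖z‖ ≤ 1) := smul_mem_eball_zero hl hz
  refine ⟨fun z ↦ exp (z • l), fun z hz ↦ ?_, fun n ↦ ?_⟩
  · exact (analyticAt_exp_of_mem_ball _ (hball (mem_closedBall_zero_iff.1 hz))).comp
      (f := fun z : ℚ_[p] ↦ z • l) (analyticAt_id.smul analyticAt_const)
  · induction n with
    | zero => simp only [Nat.cast_zero, zero_smul, exp_zero, pow_zero]
    | succ n ih =>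
      simp only [Nat.cast_succ, add_smul, one_smul, pow_succ, ← ih]
      exact exp_add_of_mem_ball (hball (IsUltrametricDist.norm_natCast_le_one _ n)) hl

variable (p E) in
theorem eventually_pow [NormOneClass E] [CompleteSpace E] :
    ∀ᶠ x in 𝓝 (1 : E), HasPadicInterpolation p (x ^ ·) := by
  filter_upwards [eventually_nhds_one_exists_exp_eq (padic_expSeries_radius_pos p E)]
  rintro _ ⟨l, hl, rfl⟩
  exact exp_pow hl

end HasPadicInterpolation

end PadicInterpolation

section PadicUnits

theorem norm_le_one_of_isIntegral_int {E : Type*} [NormedField E] [IsUltrametricDist E] {x : E}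
    (hx : IsIntegral ℤ x) : ‖x‖ ≤ 1 :=
  (Valuation.integer.integers (NormedField.valuation (K := E))).mem_of_integral hx.tower_top

theorem norm_intCast_eq_one_of_not_dvd {p : ℕ} [Fact p.Prime] (E : Type*) [NormedField E]
    [NormedAlgebra ℚ_[p] E] {d : ℤ} (hd : ¬ (p : ℤ) ∣ d) : ‖(d : E)‖ = 1 := by
  rw [← map_intCast (algebraMap ℚ_[p] E), norm_algebraMap']
  exact (Padic.norm_int_le_one d).antisymm (not_lt.1 fun h ↦ hd (Padic.norm_intCast_lt_one_iff.1 h))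

variable {ι F : Type*} [Field F] [CharZero F] [Algebra.IsAlgebraic ℚ F]

theorem eventually_norm_map_le_one (x : F) :
    ∀ᶠ p : ℕ in atTop, ∀ [Fact p.Prime] (φ : F →+* PadicAlgCl p), ‖φ x‖ ≤ 1 := by
  have hx : IsAlgebraic ℤ x :=
    (IsFractionRing.isAlgebraic_iff ℤ ℚ F).2 (Algebra.IsAlgebraic.isAlgebraic x)
  obtain ⟨d, hd, hdx⟩ := hx.exists_integral_multiple
  filter_upwards [eventually_gt_atTop d.natAbs] with p hp _ φ
  have hpd : ¬ (p : ℤ) ∣ d := fun h ↦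
    (Nat.le_of_dvd (Int.natAbs_pos.2 hd) (Int.natCast_dvd.1 h)).not_gt hp
  have hint := norm_le_one_of_isIntegral_int (hdx.map φ.toIntAlgHom)
  change ‖φ (d • x)‖ ≤ 1 at hint
  rwa [zsmul_eq_mul, map_mul, map_intCast, norm_mul, norm_intCast_eq_one_of_not_dvd _ hpd,
    one_mul] at hint

theorem eventually_norm_map_eq_one {x : F} (hx : x ≠ 0) :
    ∀ᶠ p : ℕ in atTop, ∀ [Fact p.Prime] (φ : F →+* PadicAlgCl p), ‖φ x‖ = 1 := by
  filter_upwards [eventually_norm_map_le_one x, eventually_norm_map_le_one x⁻¹] with p hle hinv _ φ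
  refine (hle φ).antisymm ((inv_le_one₀ (norm_pos_iff.2 ((map_ne_zero φ).2 hx))).1 ?_)
  rw [← norm_inv, ← map_inv₀]
  exact hinv φ

theorem exists_ringHom_padicAlgCl_forall_norm_eq_one [Finite ι] {α : ι → F} (hα : ∀ i, α i ≠ 0) :
    ∃ (p : ℕ) (_ : Fact p.Prime) (φ : F →+* PadicAlgCl p), ∀ i, ‖φ (α i)‖ = 1 := by
  obtain ⟨P, hP⟩ := eventually_atTop.1
    (eventually_all.2 fun i ↦ eventually_norm_map_eq_one (hα i))
  obtain ⟨p, hPp, hp⟩ := Nat.exists_infinite_primes P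
  have : Fact p.Prime := ⟨hp⟩
  let φ : F →ₐ[ℚ] PadicAlgCl p := IsAlgClosed.lift
  exact ⟨p, ⟨hp⟩, φ, fun i ↦ hP p hPp i φ⟩

end PadicUnits

section SkolemMahlerLech

theorem isometry_padicAlgCl_algebraMap (p : ℕ) [Fact p.Prime] :
    Isometry (algebraMap (PadicAlgCl p) ℂ_[p]) :=
  AddMonoidHomClass.isometry_of_norm _ (PadicComplex.norm_extends p)

variable {ι F : Type*} [Field F] [CharZero F] [Algebra.IsAlgebraic ℚ F]

theorem exists_ringHom_padicComplex_hasPadicInterpolation [Finite ι] {α : ι → F}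
    (hα : ∀ i, α i ≠ 0) :
    ∃ (p : ℕ) (_ : Fact p.Prime) (ψ : F →+* ℂ_[p]) (N : ℕ), 0 < N ∧
      ∀ i, HasPadicInterpolation p (ψ (α i ^ N) ^ ·) := by
  obtain ⟨p, hp, φ, hφ⟩ := exists_ringHom_padicAlgCl_forall_norm_eq_one hα
  have hnear : ∀ᶠ x in 𝓝 (1 : PadicAlgCl p),
      HasPadicInterpolation p (algebraMap (PadicAlgCl p) ℂ_[p] x ^ ·) :=
    ((isometry_padicAlgCl_algebraMap p).continuous.tendsto' 1 1 (map_one _)).eventually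
      (HasPadicInterpolation.eventually_pow p ℂ_[p])
  obtain ⟨N, hpow, hN⟩ := ((frequently_forall_pow_mem_of_isAlgebraic ℚ_[p] hφ
    hnear).and_eventually (eventually_gt_atTop 0)).exists
  refine ⟨p, hp, (algebraMap (PadicAlgCl p) ℂ_[p]).comp φ, N, hN, fun i ↦ ?_⟩
  rw [RingHom.comp_apply, map_pow]
  exact hpow i

theorem exists_progression_generalizedPowerSum_eq_zero [Fintype ι] (A : ι → F[X]) {α : ι → F}
    (hα : ∀ i, α i ≠ 0) (hzeros : {n | generalizedPowerSum A α n = 0}.Infinite) :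
    ∃ m k, 0 < k ∧ ∀ n, generalizedPowerSum A α (m + k * n) = 0 := by
  obtain ⟨p, _, ψ, N, hN, hinterp⟩ := exists_ringHom_padicComplex_hasPadicInterpolation hα
  obtain ⟨r, hr⟩ := exists_infinite_residue_class hzeros hN
  have hzero_iff (n : ℕ) : generalizedPowerSum A α (r + N * n) = 0 ↔ generalizedPowerSum
      (fun i ↦ (C (α i ^ r) * (A i).comp (C (N : F) * X + C (r : F))).map ψ)
      (fun i ↦ ψ (α i ^ N)) n = 0 := by
    rw [generalizedPowerSum_add_mul, ← map_generalizedPowerSum, map_eq_zero]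
  obtain ⟨m, k, hk, hmk⟩ := (HasPadicInterpolation.generalizedPowerSum _
    hinterp).exists_progression_eq_zero (hr.mono fun n ↦ (hzero_iff n).1)
  refine ⟨r + N * m, N * k, Nat.mul_pos hN hk, fun n ↦ ?_⟩
  rw [add_assoc, mul_assoc, ← mul_add]
  exact (hzero_iff _).2 (hmk n)

theorem nondegenerate_finitely_many_zeros_general [Fintype ι] {A : ι → F[X]} {α : ι → F}
    (hα : ∀ i, α i ≠ 0) (hA : A ≠ 0)
    (hnd : ∀ i j, i ≠ j → ∀ k : ℕ, 0 < k → (α i / α j) ^ k ≠ 1) :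
    {n | generalizedPowerSum A α n = 0}.Finite := by
  by_contra hinf
  obtain ⟨m, k, hk, hmk⟩ := exists_progression_generalizedPowerSum_eq_zero A hα hinf
  have hinj : Injective fun i ↦ α i ^ k := fun i j hij ↦ by
    by_contra hne
    refine hnd i j hne k hk ?_
    rw [div_pow, div_eq_one_iff_eq (pow_ne_zero k (hα j))]
    exact hij
  exact hA (eq_zero_of_generalizedPowerSum_progression_eq_zero hk.ne' hinj hα hmk)

end SkolemMahlerLech

/-- A non-degenerate recurrent sequence with values in a number field `K`
which is not identically zero has only finitely many zero terms. Non-degenerate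
recurrent is expressed via a generalized power sum representation with distinct nonzero
roots in the algebraic closure of `K`, no ratio of which is a root of unity. -/
theorem nondegenerate_finitely_many_zeros
    (K : Type*) [Field K] [NumberField K] (a : ℕ → K)
    (m : ℕ) (α : Fin m → AlgebraicClosure K)
    (A : Fin m → Polynomial (AlgebraicClosure K))
    (hinj : Function.Injective α) (hα : ∀ i, α i ≠ 0) (hA : ∀ i, A i ≠ 0)
    (hnd : ∀ i j, i ≠ j → ∀ k : ℕ, 0 < k → (α i / α j) ^ k ≠ 1)
    (hrep : ∀ n : ℕ,
      algebraMap K (AlgebraicClosure K) (a n) =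
        ∑ i, (A i).eval (n : AlgebraicClosure K) * α i ^ n)
    (hne : ∃ n : ℕ, a n ≠ 0) :
    {n : ℕ | a n = 0}.Finite := by
  have : Algebra.IsAlgebraic ℚ (AlgebraicClosure K) := .trans ℚ K (AlgebraicClosure K)
  have hA_ne : A ≠ 0 := by
    rintro rfl
    obtain ⟨n, hn⟩ := hne
    exact hn ((map_eq_zero _).1 ((hrep n).trans (by simp)))
  refine (nondegenerate_finitely_many_zeros_general hα hA_ne hnd).subset fun n hn ↦ ?_
  exact (hrep n).symm.trans ((map_eq_zero _).2 hn)
end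

section
/- Let N_n ⊂ ℝ^r be a sequence of lattice polytopes whose vertices are given by quasi-linear functions of n (i.e., N_n = conv{v_i(n)} with each coordinate of v_i a quasi-polynomial of degree ≤ 1 taking integer values). Then the number of lattice points |N_n ∩ ℤ^r| is a quasi-polynomial function of n for all sufficiently large n. -/
/-!
For large `n` the Fourier–Motzkin elimination of the barycentric coordinates makes the same choices
of sign, so the polytope is cut out by finitely many inequalities `0 ≤ w₀(n) + ∑ j, w j(n) * x j`
with `w j ∈ ℤ[X]`. The polytope has size `O(n)`. Hence, writing such a form as `e(x) + n * w'(n, x)`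
with constant coefficients in `e`, the quotient `⌊e(x) / n⌋` takes finitely many values, and the
inequality becomes a Boolean combination of inequalities of lower degree. Iterating, the polytope is
described in a box of size `O(n)` by inequalities between integral affine forms in `(n, x)`.
Its indicator is thus a piecewise quasi-polynomial of these forms, and such functions are preserved
by summation of a coordinate between affine bounds. After summing over all coordinates of the box,
a piecewise quasi-polynomial in `n` alone remains, which is a quasi-polynomial for large `n`.
-/

namespace LatticePointCount

open Filter Finset Polynomial

section Floor

theorem sub_one_ediv {d : ℤ} (hd : 0 < d) (z : ℤ) :
    (z - 1) / d = z / d - if d ∣ z then 1 else 0 := by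
  have hz := Int.mul_ediv_add_emod z d
  have hlt := Int.emod_lt_of_pos z hd
  have hnonneg := Int.emod_nonneg z hd.ne'
  simp only [Int.dvd_iff_emod_eq_zero]
  split_ifs with h <;> rw [Int.ediv_eq_iff_of_pos hd]
  · constructor <;> linarith
  · have : 0 < z % d := lt_of_le_of_ne hnonneg (Ne.symm h)
    constructor <;> linarith

theorem add_mul_ediv_eq {d : ℤ} (hd : d ≠ 0) (l c x : ℤ) :
    (l + c * x) / d = c * (x / d) + (l + c * (x % d)) / d := by
  have hsplit : l + c * x = l + c * (x % d) + d * (c * (x / d)) := by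
    linear_combination (-c) * Int.mul_ediv_add_emod x d
  rw [hsplit, Int.add_mul_ediv_left _ _ hd, add_comm]

theorem dvd_sub_iff_eq_emod {d s : ℤ} (hs : s ∈ Ico 0 d) (z : ℤ) : d ∣ z - s ↔ s = z % d := by
  obtain ⟨hs₀, hsd⟩ := mem_Ico.1 hs
  rw [Int.dvd_iff_emod_eq_zero, ← Int.emod_eq_emod_iff_emod_sub_eq_zero,
    Int.emod_eq_of_lt hs₀ hsd, eq_comm]

theorem sum_residues {R : Type*} [AddCommMonoid R] {d : ℤ} (hd : 0 < d) (z : ℤ) (F : ℤ → R) :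
    ∑ s ∈ Ico 0 d, (if d ∣ z - s then F s else 0) = F (z % d) := by
  have hmem : z % d ∈ Ico 0 d := mem_Ico.2 ⟨Int.emod_nonneg z hd.ne', Int.emod_lt_of_pos z hd⟩
  calc ∑ s ∈ Ico 0 d, (if d ∣ z - s then F s else 0)
      = ∑ s ∈ Ico 0 d, if s = z % d then F s else 0 :=
        sum_congr rfl fun s hs => by simp only [dvd_sub_iff_eq_emod hs z]
    _ = F (z % d) := by rw [sum_ite_eq', if_pos hmem]

end Floor

section QuasiPolynomial

/-- The algebra of quasi-polynomial functions on `ℤ`: those which agree with a polynomial on each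
residue class modulo some `D`. -/
def quasiPolynomials : Subalgebra ℚ (ℤ → ℚ) where
  carrier := {h | ∃ D : ℤ, 0 < D ∧ ∃ P : ℤ → ℚ[X], ∀ x, h x = (P (x % D)).eval (x : ℚ)}
  algebraMap_mem' c := ⟨1, one_pos, fun _ => C c, fun x => by simp⟩
  add_mem' := by
    rintro f g ⟨D, hD, P, hP⟩ ⟨E, hE, Q, hQ⟩
    refine ⟨D * E, mul_pos hD hE, fun s => P (s % D) + Q (s % E), fun x => ?_⟩
    simp only [Int.emod_emod_of_dvd x (dvd_mul_right D E),
      Int.emod_emod_of_dvd x (dvd_mul_left E D), Pi.add_apply, hP, hQ, eval_add]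
  mul_mem' := by
    rintro f g ⟨D, hD, P, hP⟩ ⟨E, hE, Q, hQ⟩
    refine ⟨D * E, mul_pos hD hE, fun s => P (s % D) * Q (s % E), fun x => ?_⟩
    simp only [Int.emod_emod_of_dvd x (dvd_mul_right D E),
      Int.emod_emod_of_dvd x (dvd_mul_left E D), Pi.mul_apply, hP, hQ, eval_mul]

theorem emod_mem_quasiPolynomials {D : ℤ} (hD : 0 < D) (φ : ℤ → ℚ) :
    (fun x => φ (x % D)) ∈ quasiPolynomials :=
  ⟨D, hD, fun s => C (φ s), fun x => by rw [eval_C]⟩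

theorem ediv_mem_quasiPolynomials {D : ℤ} (hD : 0 < D) (b : ℤ) :
    (fun x : ℤ => (((x + b) / D : ℤ) : ℚ)) ∈ quasiPolynomials := by
  refine ⟨D, hD, fun s => C (D : ℚ)⁻¹ * (X - C (s : ℚ)) + C (((s + b) / D : ℤ) : ℚ), fun x => ?_⟩
  have hD' : (D : ℚ) ≠ 0 := mod_cast hD.ne'
  have hx : (D : ℚ) * (x / D : ℤ) + (x % D : ℤ) = x := mod_cast Int.mul_ediv_add_emod x D
  have hfloor := add_mul_ediv_eq hD.ne' b 1 x
  simp only [one_mul, add_comm b] at hfloor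
  simp only [hfloor, eval_add, eval_mul, eval_C, eval_sub, eval_X, Int.cast_add, ← hx,
    add_sub_cancel_right, inv_mul_cancel_left₀ hD']

theorem eval_comp_mem_of_mem {R Y : Type*} [CommSemiring R] {S : Subalgebra R (Y → R)} {f : Y → R}
    (hf : f ∈ S) (P : R[X]) : (fun y => P.eval (f y)) ∈ S := by
  have hP : (aeval (⟨f, hf⟩ : S) P : Y → R) = fun y => P.eval (f y) := by
    ext y
    rw [← Subalgebra.aeval_coe, aeval_fn_apply, coe_aeval_eq_eval]
  exact hP ▸ (aeval (⟨f, hf⟩ : S) P).2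

theorem exists_eval_add_one_sub_eval (P : ℚ[X]) :
    ∃ Q : ℚ[X], ∀ t, Q.eval (t + 1) - Q.eval t = P.eval t := by
  induction P using Polynomial.induction_on' with
  | add P₁ P₂ h₁ h₂ =>
    obtain ⟨Q₁, hQ₁⟩ := h₁
    obtain ⟨Q₂, hQ₂⟩ := h₂
    exact ⟨Q₁ + Q₂, fun t => by simp only [eval_add, ← hQ₁, ← hQ₂]; ring⟩
  | monomial n a =>
    refine ⟨C (a / (n + 1)) * Polynomial.bernoulli (n + 1), fun t => ?_⟩
    have hn : (n + 1 : ℚ) ≠ 0 := by positivity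
    rw [eval_C_mul, eval_C_mul, add_comm t 1, bernoulli_eval_one_add, eval_monomial]
    simp only [add_tsub_cancel_right, Nat.cast_add, Nat.cast_one]
    field_simp
    ring

/- On the class of `s` modulo `D`, the antiderivative of `t ↦ P s (D t + s)` jumps exactly when
`⌊(x - 1 - s) / D⌋` does, that is, at the elements of the class. -/
theorem exists_antidifference_quasiPolynomial {h : ℤ → ℚ} (hh : h ∈ quasiPolynomials) :
    ∃ H ∈ quasiPolynomials, ∀ x, H (x + 1) = H x + h x := by
  obtain ⟨D, hD, P, hP⟩ := hh
  have hprimitive (s : ℤ) :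
      ∃ Q : ℚ[X], ∀ t, Q.eval t - Q.eval (t - 1) = (P s).eval (D * t + s) := by
    obtain ⟨Q, hQ⟩ := exists_eval_add_one_sub_eval ((P s).comp (C (D : ℚ) * (X + 1) + C (s : ℚ)))
    exact ⟨Q, fun t => by simpa using hQ (t - 1)⟩
  choose Q hQ using hprimitive
  have hstep (s x : ℤ) : (Q s).eval ((((x - s) / D : ℤ)) : ℚ) -
      (Q s).eval ((((x - 1 - s) / D : ℤ)) : ℚ) = if D ∣ x - s then (P s).eval (x : ℚ) else 0 := by
    rw [show x - 1 - s = x - s - 1 by ring, sub_one_ediv hD]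
    split_ifs with hdvd
    · have hx : (D : ℚ) * ((x - s) / D : ℤ) + s = x := by
        exact_mod_cast (by rw [Int.mul_ediv_cancel' hdvd]; ring : D * ((x - s) / D) + s = x)
      rw [Int.cast_sub, Int.cast_one, hQ, hx]
    · rw [sub_zero, sub_self]
  refine ⟨fun x => ∑ s ∈ Ico 0 D, (Q s).eval ((((x - 1 - s) / D : ℤ)) : ℚ), ?_, fun x => ?_⟩
  · have hsum := sum_mem fun s (_ : s ∈ Ico 0 D) =>
      eval_comp_mem_of_mem (ediv_mem_quasiPolynomials hD (-1 - s)) (Q s)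
    convert hsum using 1
    ext x
    simp only [Finset.sum_apply, sub_eq_add_neg, add_assoc]
  · rw [hP, ← sum_residues hD x fun s => (P s).eval (x : ℚ), ← sum_add_distrib]
    refine sum_congr rfl fun s _ => ?_
    rw [← hstep, add_sub_cancel_right]
    ring

end QuasiPolynomial

section PiecewiseQuasiPolynomial

variable {Y : Type*} {L : Submodule ℤ (Y → ℤ)}

/-- The algebra of piecewise quasi-polynomial functions of the integer-valued functions in `L`,
generated by the floors `⌊l / d⌋` and by the indicators of the half-spaces `0 ≤ l`. -/
def piecewiseQuasiPolynomials (L : Submodule ℤ (Y → ℤ)) : Subalgebra ℚ (Y → ℚ) :=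
  Algebra.adjoin ℚ ({f | ∃ l ∈ L, ∃ d : ℤ, 0 < d ∧ f = fun y => ((l y / d : ℤ) : ℚ)} ∪
    {f | ∃ l ∈ L, f = fun y => if 0 ≤ l y then 1 else 0})

theorem ediv_mem_piecewiseQuasiPolynomials {l : Y → ℤ} (hl : l ∈ L) {d : ℤ} (hd : 0 < d) :
    (fun y => ((l y / d : ℤ) : ℚ)) ∈ piecewiseQuasiPolynomials L :=
  Algebra.subset_adjoin <| .inl ⟨l, hl, d, hd, rfl⟩

theorem nonneg_mem_piecewiseQuasiPolynomials {l : Y → ℤ} (hl : l ∈ L) :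
    (fun y => if 0 ≤ l y then (1 : ℚ) else 0) ∈ piecewiseQuasiPolynomials L :=
  Algebra.subset_adjoin <| .inr ⟨l, hl, rfl⟩

theorem le_mem_piecewiseQuasiPolynomials {l l' : Y → ℤ} (hl : l ∈ L) (hl' : l' ∈ L) :
    (fun y => if l y ≤ l' y then (1 : ℚ) else 0) ∈ piecewiseQuasiPolynomials L := by
  simpa only [Pi.sub_apply, sub_nonneg] using
    nonneg_mem_piecewiseQuasiPolynomials (sub_mem hl' hl)

theorem const_mem_of_one_mem (h1 : 1 ∈ L) (c : ℤ) : (fun _ => c) ∈ L := by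
  simpa only [smul_eq_mul, Pi.smul_def, Pi.one_apply, mul_one] using L.smul_mem c h1

theorem const_mul_mem {l : Y → ℤ} (hl : l ∈ L) (c : ℤ) : (fun y => c * l y) ∈ L :=
  L.smul_mem c hl

theorem lt_mem_piecewiseQuasiPolynomials (h1 : 1 ∈ L) {l l' : Y → ℤ} (hl : l ∈ L) (hl' : l' ∈ L) :
    (fun y => if l y < l' y then (1 : ℚ) else 0) ∈ piecewiseQuasiPolynomials L :=
  le_mem_piecewiseQuasiPolynomials (add_mem hl h1) hl'

theorem dvd_ediv_sub_mem_piecewiseQuasiPolynomials (h1 : 1 ∈ L) {l : Y → ℤ} (hl : l ∈ L) {d D : ℤ}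
    (hd : 0 < d) (hD : 0 < D) (s : ℤ) :
    (fun y => if D ∣ l y / d - s then (1 : ℚ) else 0) ∈ piecewiseQuasiPolynomials L := by
  have hmem (t : ℤ) := ediv_mem_piecewiseQuasiPolynomials
    (sub_mem hl (const_mem_of_one_mem h1 (d * t))) (mul_pos hd hD)
  convert sub_mem (hmem s) (hmem (s + 1)) using 1
  ext y
  have hfloor (t : ℤ) : (l y - d * t) / (d * D) = (l y / d - t) / D := by
    rw [← Int.ediv_ediv_of_nonneg hd.le, Int.sub_mul_ediv_left _ _ hd.ne']
  simp only [Pi.sub_apply, hfloor, ← sub_sub, sub_one_ediv hD]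
  push_cast
  ring

theorem quasiPolynomial_ediv_mem_piecewiseQuasiPolynomials (h1 : 1 ∈ L) {h : ℤ → ℚ}
    (hh : h ∈ quasiPolynomials) {l : Y → ℤ} (hl : l ∈ L) {d : ℤ} (hd : 0 < d) :
    (fun y => h (l y / d)) ∈ piecewiseQuasiPolynomials L := by
  obtain ⟨D, hD, P, hP⟩ := hh
  have hsum := sum_mem fun s (_ : s ∈ Ico 0 D) =>
    mul_mem (dvd_ediv_sub_mem_piecewiseQuasiPolynomials h1 hl hd hD s)
      (eval_comp_mem_of_mem (ediv_mem_piecewiseQuasiPolynomials hl hd) (P s))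
  convert hsum using 1
  ext y
  rw [hP, ← sum_residues hD (l y / d) fun s => (P s).eval ((l y / d : ℤ) : ℚ)]
  simp only [Finset.sum_apply, Pi.mul_apply, ite_mul, one_mul, zero_mul]

end PiecewiseQuasiPolynomial

section Cut

variable {Y : Type*} {L : Submodule ℤ (Y → ℤ)}

/-- The indicators of half-lines in the variable `x` whose end point depends on the parameter `y`
through `L`, together with the indicator `1` of the whole line. -/
def cuts (L : Submodule ℤ (Y → ℤ)) : Set (Y → ℤ → ℚ) :=
  insert 1 {φ | ∃ l ∈ L, ∃ d : ℤ, 0 < d ∧ φ = fun y x => if l y < d * x then 1 else 0}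

/-- The products of a piecewise quasi-polynomial in the parameter, a quasi-polynomial in the
variable and a cut. -/
def cutTerms (L : Submodule ℤ (Y → ℤ)) : Set (Y → ℤ → ℚ) :=
  {f | ∃ g ∈ piecewiseQuasiPolynomials L, ∃ h ∈ quasiPolynomials, ∃ φ ∈ cuts L,
    f = fun y x => g y * h x * φ y x}

theorem exists_cut_mul_cut_eq {φ φ' : Y → ℤ → ℚ} (hφ : φ ∈ cuts L) (hφ' : φ' ∈ cuts L) :
    ∃ g ∈ piecewiseQuasiPolynomials L,
      ∀ y x, φ y x * φ' y x = g y * φ y x + (1 - g y) * φ' y x := by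
  rcases hφ with rfl | ⟨l, hl, d, hd, rfl⟩
  · exact ⟨0, zero_mem _, fun y x => by simp⟩
  rcases hφ' with rfl | ⟨l', hl', d', hd', rfl⟩
  · exact ⟨1, one_mem _, fun y x => by simp⟩
  refine ⟨_, le_mem_piecewiseQuasiPolynomials (const_mul_mem hl' d) (const_mul_mem hl d'),
    fun y x => ?_⟩
  have hcut : l y < d * x ↔ d' * l y < d * d' * x := by
    rw [← mul_lt_mul_iff_of_pos_left hd', mul_left_comm, mul_assoc]
  have hcut' : l' y < d' * x ↔ d * l' y < d * d' * x := by
    rw [← mul_lt_mul_iff_of_pos_left hd, mul_assoc]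
  simp only [hcut, hcut']
  split_ifs <;> first | omega | norm_num

theorem mul_mem_span_cutTerms {f f' : Y → ℤ → ℚ} (hf : f ∈ Submodule.span ℚ (cutTerms L))
    (hf' : f' ∈ Submodule.span ℚ (cutTerms L)) : f * f' ∈ Submodule.span ℚ (cutTerms L) := by
  suffices hmul : Submodule.span ℚ (cutTerms L) * Submodule.span ℚ (cutTerms L) ≤
      Submodule.span ℚ (cutTerms L) from hmul (Submodule.mul_mem_mul hf hf')
  rw [Submodule.span_mul_span, Submodule.span_le]
  rintro _ ⟨_, ⟨g, hg, h, hh, φ, hφ, rfl⟩, _, ⟨g', hg', h', hh', φ', hφ', rfl⟩, rfl⟩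
  obtain ⟨p, hp, hφφ'⟩ := exists_cut_mul_cut_eq hφ hφ'
  have hterm {q : Y → ℚ} (hq : q ∈ piecewiseQuasiPolynomials L) {ψ : Y → ℤ → ℚ} (hψ : ψ ∈ cuts L) :
      (fun y x => (g * g' * q) y * (h * h') x * ψ y x) ∈ Submodule.span ℚ (cutTerms L) :=
    Submodule.subset_span
      ⟨_, mul_mem (mul_mem hg hg') hq, _, mul_mem hh hh', ψ, hψ, rfl⟩
  rw [SetLike.mem_coe]
  convert add_mem (hterm hp hφ) (hterm (sub_mem (one_mem _) hp) hφ') using 1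
  ext y x
  simp only [Pi.add_apply, Pi.mul_apply, Pi.sub_apply, Pi.one_apply]
  linear_combination (g y * g' y * h x * h' x) * hφφ' y x

/-- The algebra of functions of a parameter and an integer variable spanned by the cut terms. -/
def cutAlgebra (L : Submodule ℤ (Y → ℤ)) : Subalgebra ℚ (Y → ℤ → ℚ) :=
  (Submodule.span ℚ (cutTerms L)).toSubalgebra
    (Submodule.subset_span ⟨1, one_mem _, 1, one_mem _, 1, Set.mem_insert _ _, by ext; simp⟩)
    fun _ _ => mul_mem_span_cutTerms

theorem parameter_mem_cutAlgebra {g : Y → ℚ} (hg : g ∈ piecewiseQuasiPolynomials L) :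
    (fun y _ => g y) ∈ cutAlgebra L :=
  Submodule.subset_span ⟨g, hg, 1, one_mem _, 1, Set.mem_insert _ _, by ext; simp⟩

theorem quasiPolynomial_mem_cutAlgebra {h : ℤ → ℚ} (hh : h ∈ quasiPolynomials) :
    (fun _ x => h x) ∈ cutAlgebra L :=
  Submodule.subset_span ⟨1, one_mem _, h, hh, 1, Set.mem_insert _ _, by ext; simp⟩

theorem lt_mul_mem_cutAlgebra {l : Y → ℤ} (hl : l ∈ L) {d : ℤ} (hd : 0 < d) :
    (fun y x => if l y < d * x then (1 : ℚ) else 0) ∈ cutAlgebra L :=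
  Submodule.subset_span
    ⟨1, one_mem _, 1, one_mem _, _, Set.mem_insert_of_mem _ ⟨l, hl, d, hd, rfl⟩, by ext; simp⟩

theorem exists_antidifference_cutTerm (h1 : 1 ∈ L) {f : Y → ℤ → ℚ} (hf : f ∈ cutTerms L) :
    ∃ G : Y → ℤ → ℚ, (∀ y x, G y (x + 1) = G y x + f y x) ∧
      ∀ N ∈ L, (fun y => G y (N y)) ∈ piecewiseQuasiPolynomials L := by
  obtain ⟨g, hg, h, hh, φ, hφ, rfl⟩ := hf
  obtain ⟨H, hH, hstep⟩ := exists_antidifference_quasiPolynomial hh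
  have hHN {N : Y → ℤ} (hN : N ∈ L) : (fun y => H (N y)) ∈ piecewiseQuasiPolynomials L := by
    simpa only [Int.ediv_one] using
      quasiPolynomial_ediv_mem_piecewiseQuasiPolynomials h1 hH hN one_pos
  rcases hφ with rfl | ⟨l, hl, d, hd, rfl⟩
  · refine ⟨fun y x => g y * H x, fun y x => ?_, fun N hN => mul_mem hg (hHN hN)⟩
    simp only [hstep, Pi.one_apply, mul_one, mul_add]
  · refine ⟨fun y x => g y * ((if l y < d * x then 1 else 0) * (H x - H ((l y + d) / d))),
      fun y x => ?_, fun N hN => mul_mem hg <| mul_mem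
        (lt_mem_piecewiseQuasiPolynomials h1 hl (const_mul_mem hN d)) <| sub_mem (hHN hN) <|
        quasiPolynomial_ediv_mem_piecewiseQuasiPolynomials h1 hH
          (add_mem hl (const_mem_of_one_mem h1 d)) hd⟩
    rcases lt_or_ge (l y) (d * x) with hx | hx
    · have hx' : l y < d * (x + 1) := by linarith
      simp only [hx, hx', if_true, hstep]
      ring
    · rcases lt_or_ge (l y) (d * (x + 1)) with hx' | hx'
      · have hend : (l y + d) / d = x + 1 := by
          rw [Int.ediv_eq_iff_of_pos hd]
          constructor <;> linarith
        simp only [hend, hx.not_gt, sub_self, mul_zero, zero_mul, if_false, add_zero]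
      · simp only [hx.not_gt, hx'.not_gt, if_false, zero_mul, mul_zero, add_zero]

theorem exists_antidifference_cutAlgebra (h1 : 1 ∈ L) {f : Y → ℤ → ℚ} (hf : f ∈ cutAlgebra L) :
    ∃ G : Y → ℤ → ℚ, (∀ y x, G y (x + 1) = G y x + f y x) ∧
      ∀ N ∈ L, (fun y => G y (N y)) ∈ piecewiseQuasiPolynomials L := by
  change f ∈ Submodule.span ℚ (cutTerms L) at hf
  induction hf using Submodule.span_induction with
  | mem f hf => exact exists_antidifference_cutTerm h1 hf
  | zero => exact ⟨0, fun y x => by simp, fun N _ => zero_mem _⟩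
  | add f₁ f₂ _ _ ih₁ ih₂ =>
    obtain ⟨G₁, hstep₁, hG₁⟩ := ih₁
    obtain ⟨G₂, hstep₂, hG₂⟩ := ih₂
    refine ⟨G₁ + G₂, fun y x => ?_, fun N hN => add_mem (hG₁ N hN) (hG₂ N hN)⟩
    simp only [Pi.add_apply, hstep₁, hstep₂]
    ring
  | smul c f _ ih =>
    obtain ⟨G, hstep, hG⟩ := ih
    refine ⟨c • G, fun y x => ?_, fun N hN => Subalgebra.smul_mem _ (hG N hN) c⟩
    simp only [Pi.smul_apply, hstep, smul_add]

theorem sum_Ico_eq_sub_of_antidifference {A : Type*} [AddCommGroup A] {f G : ℤ → A}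
    (hG : ∀ x, G (x + 1) = G x + f x) {m n : ℤ} (hmn : m ≤ n) : ∑ x ∈ Ico m n, f x = G n - G m := by
  induction n, hmn using Int.leInduction with
  | base => simp
  | succ n hmn ih =>
    rw [← insert_Ico_right_eq_Ico_add_one hmn, sum_insert right_notMem_Ico, ih, hG]
    abel

theorem sum_Ico_mem_piecewiseQuasiPolynomials (h1 : 1 ∈ L) {f : Y → ℤ → ℚ} (hf : f ∈ cutAlgebra L)
    {M N : Y → ℤ} (hM : M ∈ L) (hN : N ∈ L) :
    (fun y => ∑ x ∈ Ico (M y) (N y), f y x) ∈ piecewiseQuasiPolynomials L := by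
  obtain ⟨G, hstep, hG⟩ := exists_antidifference_cutAlgebra h1 hf
  convert mul_mem (le_mem_piecewiseQuasiPolynomials hM hN) (sub_mem (hG N hN) (hG M hM)) using 1
  ext y
  simp only [Pi.mul_apply, Pi.sub_apply, ite_mul, one_mul, zero_mul]
  split_ifs with hMN
  · exact sum_Ico_eq_sub_of_antidifference (hstep y) hMN
  · rw [Ico_eq_empty (fun h => hMN h.le), sum_empty]

theorem ediv_add_mul_mem_cutAlgebra (h1 : 1 ∈ L) {l : Y → ℤ} (hl : l ∈ L) (c : ℤ) {d : ℤ}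
    (hd : 0 < d) : (fun y x => (((l y + c * x) / d : ℤ) : ℚ)) ∈ cutAlgebra L := by
  have hresidue (s : ℤ) : (fun y x => if s = x % d then (((l y + c * s) / d : ℤ) : ℚ) else 0) ∈
      cutAlgebra L := by
    convert mul_mem
      (quasiPolynomial_mem_cutAlgebra
        (emod_mem_quasiPolynomials hd fun t => if s = t then 1 else 0))
      (parameter_mem_cutAlgebra (ediv_mem_piecewiseQuasiPolynomials
        (add_mem hl (const_mem_of_one_mem h1 (c * s))) hd)) using 1
    ext y x
    simp only [Pi.mul_apply, Pi.add_apply, ite_mul, one_mul, zero_mul]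
  have hquotient := quasiPolynomial_mem_cutAlgebra (L := L) (ediv_mem_quasiPolynomials hd 0)
  convert add_mem (Subalgebra.smul_mem _ hquotient (c : ℚ))
    (sum_mem fun s (_ : s ∈ Ico 0 d) => hresidue s) using 1
  ext y x
  have hx : x % d ∈ Ico 0 d := mem_Ico.2 ⟨Int.emod_nonneg x hd.ne', Int.emod_lt_of_pos x hd⟩
  rw [add_mul_ediv_eq hd.ne']
  simp only [Pi.add_apply, Pi.smul_apply, Finset.sum_apply, sum_ite_eq', hx, if_true, smul_eq_mul,
    Int.cast_add, Int.cast_mul, add_zero]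

theorem nonneg_add_mul_mem_cutAlgebra (h1 : 1 ∈ L) {l : Y → ℤ} (hl : l ∈ L) (c : ℤ) :
    (fun y x => if 0 ≤ l y + c * x then (1 : ℚ) else 0) ∈ cutAlgebra L := by
  rcases lt_trichotomy c 0 with hc | rfl | hc
  · convert sub_mem (one_mem _) (lt_mul_mem_cutAlgebra hl (neg_pos.2 hc)) using 1
    ext y x
    simp only [Pi.sub_apply, Pi.one_apply]
    split_ifs <;> linarith
  · simpa only [zero_mul, add_zero] using
      parameter_mem_cutAlgebra (nonneg_mem_piecewiseQuasiPolynomials hl)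
  · convert lt_mul_mem_cutAlgebra (sub_mem (neg_mem hl) h1) hc using 5 with y x
    simp only [Pi.sub_apply, Pi.neg_apply, Pi.one_apply]
    omega

theorem comp_mem_cutAlgebra {Y' : Type*} {L' : Submodule ℤ (Y' → ℤ)} (h1 : 1 ∈ L)
    {e : Y → ℤ → Y'} (he : ∀ l' ∈ L', ∃ l ∈ L, ∃ c : ℤ, ∀ y x, l' (e y x) = l y + c * x)
    {F : Y' → ℚ} (hF : F ∈ piecewiseQuasiPolynomials L') :
    (fun y x => F (e y x)) ∈ cutAlgebra L := by
  induction hF using Algebra.adjoin_induction with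
  | mem F hF =>
    rcases hF with ⟨l', hl', d, hd, rfl⟩ | ⟨l', hl', rfl⟩ <;>
      obtain ⟨l, hl, c, hlc⟩ := he l' hl' <;> simp only [hlc]
    · exact ediv_add_mul_mem_cutAlgebra h1 hl c hd
    · exact nonneg_add_mul_mem_cutAlgebra h1 hl c
  | algebraMap q => exact (cutAlgebra L).algebraMap_mem q
  | add F₁ F₂ _ _ ih₁ ih₂ => exact add_mem ih₁ ih₂
  | mul F₁ F₂ _ _ ih₁ ih₂ => exact mul_mem ih₁ ih₂

end Cut

section EventualSign

theorem eventually_sign_eval_atTop (P : ℝ[X]) :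
    ∀ᶠ x in atTop, SignType.sign (P.eval x) = SignType.sign P.leadingCoeff := by
  rcases eq_or_ne P 0 with rfl | hP
  · simp
  have hroots : ∀ᶠ x in atTop, ∀ y, P.IsRoot y → y < x := by
    simpa only [mem_roots hP, Multiset.mem_toFinset] using
      (eventually_all_finset P.roots.toFinset).2 fun y _ => eventually_gt_atTop y
  filter_upwards [hroots] with x hx
  rcases lt_or_gt_of_ne (leadingCoeff_ne_zero.2 hP) with hlc | hlc
  · rw [sign_neg hlc, sign_neg (P.eval_lt_zero_of_roots_lt_of_leadingCoeff_nonpos hx hlc.le)]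
  · rw [sign_pos hlc, sign_pos (P.zero_lt_eval_of_roots_lt_of_leadingCoeff_nonneg hx hlc.le)]

theorem exists_eventually_sign_aeval_natCast (P : ℤ[X]) :
    ∃ s, ∀ᶠ n : ℕ in atTop, SignType.sign (aeval (n : ℝ) P) = s :=
  ⟨_, by
    simpa only [eval_map_algebraMap] using tendsto_natCast_atTop_atTop.eventually
      (eventually_sign_eval_atTop (P.map (algebraMap ℤ ℝ)))⟩

end EventualSign

section AffineForm

/-- The affine forms with integer coefficients in a natural number `n` and an integer vector `x`. -/
def affineForms (r : ℕ) : Submodule ℤ (ℕ × (Fin r → ℤ) → ℤ) where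
  carrier := {l | ∃ a b : ℤ, ∃ c : Fin r → ℤ, ∀ y, l y = a * y.1 + b + c ⬝ᵥ y.2}
  zero_mem' := ⟨0, 0, 0, fun y => by simp⟩
  add_mem' := by
    rintro f g ⟨a, b, c, h⟩ ⟨a', b', c', h'⟩
    refine ⟨a + a', b + b', c + c', fun y => ?_⟩
    rw [Pi.add_apply, h, h', add_dotProduct]
    ring
  smul_mem' := by
    rintro m f ⟨a, b, c, h⟩
    refine ⟨m * a, m * b, m • c, fun y => ?_⟩
    rw [Pi.smul_apply, h, smul_dotProduct, smul_eq_mul, smul_eq_mul]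
    ring

variable {r : ℕ}

theorem one_mem_affineForms : 1 ∈ affineForms r := ⟨0, 1, 0, fun y => by simp⟩

theorem mul_fst_mem_affineForms (a : ℤ) : (fun y => a * y.1) ∈ affineForms r :=
  ⟨a, 0, 0, fun y => by simp⟩

theorem exists_cons_eq_add_mul_of_mem_affineForms {l : ℕ × (Fin (r + 1) → ℤ) → ℤ}
    (hl : l ∈ affineForms (r + 1)) :
    ∃ l₀ ∈ affineForms r, ∃ c : ℤ, ∀ y x, l (y.1, Fin.cons x y.2) = l₀ y + c * x := by
  obtain ⟨a, b, c, h⟩ := hl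
  refine ⟨fun y => a * y.1 + b + Matrix.vecTail c ⬝ᵥ y.2, ⟨a, b, _, fun _ => rfl⟩, c 0,
    fun y x => ?_⟩
  have hcons : c ⬝ᵥ Fin.cons x y.2 = c 0 * x + Matrix.vecTail c ⬝ᵥ y.2 :=
    Matrix.dotProduct_cons c x y.2
  rw [h, hcons]
  ring

end AffineForm

section EventuallyQuasiPolynomial

/-- The algebra of functions on `ℕ` which agree with a quasi-polynomial for all large arguments. -/
def eventuallyQuasiPolynomials : Subalgebra ℚ (ℕ → ℚ) where
  carrier := {f | ∃ h ∈ quasiPolynomials, ∀ᶠ n : ℕ in atTop, f n = h n}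
  algebraMap_mem' c := ⟨_, quasiPolynomials.algebraMap_mem c, Eventually.of_forall fun _ => rfl⟩
  add_mem' := by
    rintro f g ⟨h, hh, hfh⟩ ⟨h', hh', hgh'⟩
    refine ⟨h + h', add_mem hh hh', ?_⟩
    filter_upwards [hfh, hgh'] with n hn hn'
    rw [Pi.add_apply, Pi.add_apply, hn, hn']
  mul_mem' := by
    rintro f g ⟨h, hh, hfh⟩ ⟨h', hh', hgh'⟩
    refine ⟨h * h', mul_mem hh hh', ?_⟩
    filter_upwards [hfh, hgh'] with n hn hn'
    rw [Pi.mul_apply, Pi.mul_apply, hn, hn']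

theorem eventuallyQuasiPolynomials_congr {f g : ℕ → ℚ} (hf : f ∈ eventuallyQuasiPolynomials)
    (hgf : ∀ᶠ n in atTop, g n = f n) : g ∈ eventuallyQuasiPolynomials := by
  obtain ⟨h, hh, hfh⟩ := hf
  exact ⟨h, hh, by filter_upwards [hgf, hfh] with n hn hn' using hn.trans hn'⟩

theorem ediv_linear_mem_quasiPolynomials (a b : ℤ) {d : ℤ} (hd : 0 < d) :
    (fun x => (((a * x + b) / d : ℤ) : ℚ)) ∈ quasiPolynomials := by
  convert add_mem (Subalgebra.smul_mem _ (ediv_mem_quasiPolynomials hd 0) (a : ℚ))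
    (emod_mem_quasiPolynomials hd fun s => (((b + a * s) / d : ℤ) : ℚ)) using 1
  ext x
  rw [add_comm, add_mul_ediv_eq hd.ne']
  simp only [Pi.add_apply, Pi.smul_apply, smul_eq_mul, add_zero, Int.cast_add, Int.cast_mul]

theorem exists_eventually_nonneg_linear_iff (a b : ℤ) :
    ∃ p : Prop, ∀ᶠ n : ℕ in atTop, 0 ≤ a * n + b ↔ p := by
  obtain ⟨s, hs⟩ := exists_eventually_sign_aeval_natCast (C a * X + C b)
  refine ⟨s ≠ -1, ?_⟩
  filter_upwards [hs] with n hn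
  have heval : aeval (n : ℝ) (C a * X + C b) = ((a * n + b : ℤ) : ℝ) := by simp
  rw [← hn, heval, Ne, sign_eq_neg_one_iff, not_lt, Int.cast_nonneg_iff]

theorem restrict_mem_eventuallyQuasiPolynomials {r : ℕ} {F : ℕ × (Fin r → ℤ) → ℚ}
    (hF : F ∈ piecewiseQuasiPolynomials (affineForms r)) (x : Fin r → ℤ) :
    (fun n => F (n, x)) ∈ eventuallyQuasiPolynomials := by
  classical
  induction hF using Algebra.adjoin_induction with
  | mem F hF =>
    rcases hF with ⟨l, ⟨a, b, c, hl⟩, d, hd, rfl⟩ | ⟨l, ⟨a, b, c, hl⟩, rfl⟩ <;>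
      simp only [hl, add_assoc]
    · exact ⟨_, ediv_linear_mem_quasiPolynomials a (b + c ⬝ᵥ x) hd,
        Eventually.of_forall fun _ => rfl⟩
    · obtain ⟨p, hp⟩ := exists_eventually_nonneg_linear_iff a (b + c ⬝ᵥ x)
      refine ⟨_, quasiPolynomials.algebraMap_mem (if p then 1 else 0), ?_⟩
      filter_upwards [hp] with n hn
      simp only [hn, Pi.algebraMap_apply, Algebra.algebraMap_self_apply]
  | algebraMap q => exact eventuallyQuasiPolynomials.algebraMap_mem q
  | add F₁ F₂ _ _ ih₁ ih₂ => exact add_mem ih₁ ih₂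
  | mul F₁ F₂ _ _ ih₁ ih₂ => exact mul_mem ih₁ ih₂

theorem sum_piFinset_fin_succ {α β : Type*} [AddCommMonoid β] {r : ℕ} (S : Finset α)
    (F : (Fin (r + 1) → α) → β) :
    ∑ p ∈ Fintype.piFinset (fun _ : Fin (r + 1) => S), F p =
      ∑ z ∈ Fintype.piFinset (fun _ : Fin r => S), ∑ x ∈ S, F (Fin.cons x z) := by
  classical
  have hbox := Finset.filter_piFinset_eq_map_consEquiv (fun _ : Fin (r + 1) => S) fun _ => True
  rw [filter_true_of_mem fun _ _ => trivial, filter_true_of_mem fun _ _ => trivial] at hbox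
  rw [hbox, sum_map, sum_product_right]
  rfl

theorem sum_box_mem_eventuallyQuasiPolynomials (K : ℕ) {r : ℕ} {F : ℕ × (Fin r → ℤ) → ℚ}
    (hF : F ∈ piecewiseQuasiPolynomials (affineForms r)) :
    (fun n : ℕ => ∑ p ∈ Fintype.piFinset fun _ : Fin r => Ico (-(K * n : ℤ)) (K * n + 1),
      F (n, p)) ∈ eventuallyQuasiPolynomials := by
  induction r with
  | zero =>
    simp only [Fintype.piFinset_of_isEmpty, univ_unique, sum_singleton]
    exact restrict_mem_eventuallyQuasiPolynomials hF _
  | succ r ih =>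
    have hK := mul_fst_mem_affineForms (r := r) K
    have hsum : (fun y : ℕ × (Fin r → ℤ) => ∑ x ∈ Ico (-(K * y.1 : ℤ)) (K * y.1 + 1),
        F (y.1, Fin.cons x y.2)) ∈ piecewiseQuasiPolynomials (affineForms r) :=
      sum_Ico_mem_piecewiseQuasiPolynomials one_mem_affineForms
        (comp_mem_cutAlgebra one_mem_affineForms
          (fun _ => exists_cons_eq_add_mul_of_mem_affineForms) hF)
        (neg_mem hK) (add_mem hK one_mem_affineForms)
    simpa only [sum_piFinset_fin_succ] using ih hsum

end EventuallyQuasiPolynomial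

section ResidueClass

theorem mem_eventuallyQuasiPolynomials_of_residues {f : ℕ → ℚ} {M : ℕ} (hM : 0 < M)
    (hf : ∀ ρ < M, (fun n => f (n * M + ρ)) ∈ eventuallyQuasiPolynomials) :
    f ∈ eventuallyQuasiPolynomials := by
  choose! h hh hfh using hf
  have hquot {ρ : ℕ} (hρ : ρ < M) :
      (fun n : ℕ => h ρ (n / M)) ∈ eventuallyQuasiPolynomials := by
    simpa only [one_mul] using restrict_mem_eventuallyQuasiPolynomials (r := 0)
      (quasiPolynomial_ediv_mem_piecewiseQuasiPolynomials one_mem_affineForms (hh ρ hρ)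
        (mul_fst_mem_affineForms 1) (mod_cast hM : (0 : ℤ) < M)) 0
  have hclass (ρ : ℕ) : (fun n : ℕ => if n % M = ρ then (1 : ℚ) else 0) ∈
      eventuallyQuasiPolynomials :=
    ⟨_, emod_mem_quasiPolynomials (mod_cast hM : (0 : ℤ) < M) fun s => if s = ρ then 1 else 0,
      Eventually.of_forall fun n => by norm_cast⟩
  have hsum := sum_mem fun ρ (hρ : ρ ∈ range M) => mul_mem (hclass ρ) (hquot (mem_range.1 hρ))
  refine eventuallyQuasiPolynomials_congr hsum ?_
  have heventually : ∀ᶠ m : ℕ in atTop, ∀ ρ ∈ range M, f (m * M + ρ) = h ρ m :=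
    (eventually_all_finset _).2 fun ρ hρ => hfh ρ (mem_range.1 hρ)
  filter_upwards [(Nat.tendsto_div_const_atTop hM.ne').eventually heventually] with n hn
  have hmem : n % M ∈ range M := mem_range.2 (n.mod_lt hM)
  simp only [Finset.sum_apply, Pi.mul_apply, ite_mul, one_mul, zero_mul, sum_ite_eq, hmem, if_true]
  rw [← Int.natCast_ediv, ← hn _ hmem, Nat.div_add_mod']

theorem exists_polynomial_on_residues {f : ℕ → ℚ} (hf : f ∈ eventuallyQuasiPolynomials) :
    ∃ M : ℕ, 0 < M ∧ ∃ N : ℕ, ∀ ρ < M, ∃ P : ℚ[X], ∀ n, N ≤ n → f (n * M + ρ) = P.eval (n : ℚ) := by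
  obtain ⟨h, ⟨D, hD, P, hP⟩, hfh⟩ := hf
  lift D to ℕ using hD.le
  obtain ⟨N, hN⟩ := eventually_atTop.1 hfh
  refine ⟨D, mod_cast hD, N, fun ρ hρ =>
    ⟨(P ρ).comp (X * C (D : ℚ) + C (ρ : ℚ)), fun n hn => ?_⟩⟩
  have hlarge : N ≤ n * D + ρ :=
    hn.trans <| (Nat.le_mul_of_pos_right n (mod_cast hD)).trans (Nat.le_add_right _ _)
  have hmod : ((n * D + ρ : ℕ) : ℤ) % D = ρ := by
    rw [← Int.natCast_mod, Nat.mul_add_mod_of_lt hρ]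
  rw [hN _ hlarge, hP, hmod]
  simp

end ResidueClass

section SpecializedForm

variable {A R : Type*} [CommRing A] [CommRing R]

/-- The linear form with coefficients `ε ∘ w`, evaluated at `z`, as a semilinear function
of `w`. -/
def specializedForm {ι : Type*} [Fintype ι] (ε : A →+* R) (z : ι → R) : (ι → A) →ₛₗ[ε] R where
  toFun w := ∑ j, ε (w j) * z j
  map_add' w w' := by simp only [Pi.add_apply, map_add, add_mul, sum_add_distrib]
  map_smul' a w := by simp only [Pi.smul_apply, smul_eq_mul, map_mul, mul_assoc, mul_sum]

theorem specializedForm_single {ι : Type*} [Fintype ι] [DecidableEq ι] (ε : A →+* R) (z : ι → R)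
    (j : ι) : specializedForm ε z (Pi.single j 1) = z j := by
  simp [specializedForm, Pi.single_apply, apply_ite]

theorem specializedForm_cons (ε : A →+* R) {k : ℕ} (s : R) (t : Fin k → R) (w : Fin (k + 1) → A) :
    specializedForm ε (Fin.cons s t) w = ε (w 0) * s + specializedForm ε t (Matrix.vecTail w) := by
  simp [specializedForm, Fin.sum_univ_succ, Matrix.vecTail]

end SpecializedForm

section FourierMotzkin

variable {𝕜 : Type*} [Field 𝕜] [LinearOrder 𝕜] [IsStrictOrderedRing 𝕜]

theorem exists_mem_upperBounds_inter_lowerBounds {α : Type*} [LinearOrder α] [Nonempty α]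
    {s t : Set α} (hs : s.Finite) (ht : t.Finite) (hst : ∀ a ∈ s, ∀ b ∈ t, a ≤ b) :
    ∃ m, m ∈ upperBounds s ∧ m ∈ lowerBounds t := by
  rcases s.eq_empty_or_nonempty with rfl | hs₀
  · obtain ⟨m, hm⟩ := ht.bddBelow
    exact ⟨m, by simp, hm⟩
  · obtain ⟨m, hms, hm⟩ := Set.exists_max_image s id hs hs₀
    exact ⟨m, hm, hst m hms⟩

theorem exists_forall_nonneg_mul_add_iff {ι : Type*} {S : Set ι} (hS : S.Finite) (a b : ι → 𝕜) :
    (∃ t, ∀ i ∈ S, 0 ≤ a i * t + b i) ↔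
      (∀ i ∈ S, a i = 0 → 0 ≤ b i) ∧
        ∀ i ∈ S, 0 < a i → ∀ j ∈ S, a j < 0 → 0 ≤ -a j * b i + a i * b j := by
  constructor
  · rintro ⟨t, ht⟩
    refine ⟨fun i hi h0 => by simpa [h0] using ht i hi, fun i hi hai j hj haj => ?_⟩
    calc 0 ≤ -a j * (a i * t + b i) + a i * (a j * t + b j) :=
          add_nonneg (mul_nonneg (neg_nonneg.2 haj.le) (ht i hi)) (mul_nonneg hai.le (ht j hj))
      _ = -a j * b i + a i * b j := by ring
  · rintro ⟨hzero, hpair⟩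
    obtain ⟨t, hlower, hupper⟩ := exists_mem_upperBounds_inter_lowerBounds
      (s := (fun i => -b i / a i) '' {i ∈ S | 0 < a i})
      (t := (fun i => -b i / a i) '' {i ∈ S | a i < 0})
      ((hS.subset (Set.sep_subset _ _)).image _) ((hS.subset (Set.sep_subset _ _)).image _) (by
        rintro _ ⟨i, ⟨hi, hai⟩, rfl⟩ _ ⟨j, ⟨hj, haj⟩, rfl⟩
        change -b i / a i ≤ -b j / a j
        rw [← neg_div_neg_eq (-b j) (a j), div_le_div_iff₀ hai (neg_pos.2 haj)]
        linarith [hpair i hi hai j hj haj])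
    refine ⟨t, fun i hi => ?_⟩
    rcases lt_trichotomy (a i) 0 with hai | hai | hai
    · have hle : t ≤ -b i / a i := hupper ⟨i, ⟨hi, hai⟩, rfl⟩
      linarith [(le_div_iff_of_neg hai).1 hle]
    · simpa [hai] using hzero i hi hai
    · have hle : -b i / a i ≤ t := hlower ⟨i, ⟨hi, hai⟩, rfl⟩
      linarith [(div_le_iff₀ hai).1 hle]

variable {A V : Type*} [CommRing A] [AddCommGroup V] [Module A V]

theorem exists_elimination (σ : A → SignType) {cs : Set (A × V)} (hcs : cs.Finite) :
    ∃ ws : Set V, ws.Finite ∧ ∀ ε : A →+* 𝕜, (∀ c ∈ cs, SignType.sign (ε c.1) = σ c.1) →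
      ∀ φ : V →ₛₗ[ε] 𝕜,
        (∃ t, ∀ c ∈ cs, 0 ≤ ε c.1 * t + φ c.2) ↔ ∀ w ∈ ws, 0 ≤ φ w := by
  refine ⟨Prod.snd '' {c ∈ cs | σ c.1 = 0} ∪
    Set.image2 (fun p q => -q.1 • p.2 + p.1 • q.2) {p ∈ cs | σ p.1 = 1} {q ∈ cs | σ q.1 = -1},
    ((hcs.subset (Set.sep_subset _ _)).image _).union
      ((hcs.subset (Set.sep_subset _ _)).image2 _ (hcs.subset (Set.sep_subset _ _))),
    fun ε hε φ => ?_⟩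
  rw [exists_forall_nonneg_mul_add_iff hcs (fun c => ε c.1) fun c => φ c.2]
  simp only [Set.mem_union, or_imp, forall_and, Set.forall_mem_image, Set.forall_mem_image2,
    Set.mem_sep_iff, and_imp, map_add, map_smulₛₗ, map_neg, smul_eq_mul]
  refine and_congr (forall₂_congr fun c hc => ?_) (forall₂_congr fun p hp => ?_)
  · rw [← hε c hc, sign_eq_zero_iff]
  · rw [← hε p hp, sign_eq_one_iff]
    refine forall_congr' fun _ => forall₂_congr fun q hq => ?_
    rw [← hε q hq, sign_eq_neg_one_iff]

variable {l : Filter (A →+* 𝕜)}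

theorem eventually_fourier_motzkin (hsign : ∀ a, ∃ s, ∀ᶠ ε in l, SignType.sign (ε a) = s) {k : ℕ}
    {cs : Set ((Fin k → A) × V)} (hcs : cs.Finite) :
    ∃ ws : Set V, ws.Finite ∧ ∀ᶠ ε in l, ∀ φ : V →ₛₗ[ε] 𝕜,
      (∃ t, ∀ c ∈ cs, 0 ≤ specializedForm ε t c.1 + φ c.2) ↔ ∀ w ∈ ws, 0 ≤ φ w := by
  induction k with
  | zero =>
    refine ⟨Prod.snd '' cs, hcs.image _, Eventually.of_forall fun ε φ => ?_⟩
    simp [specializedForm]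
  | succ k ih =>
    choose σ hσ using hsign
    obtain ⟨cs', hcs', helim⟩ := exists_elimination (𝕜 := 𝕜) σ
      (hcs.image fun c => (c.1 0, (Matrix.vecTail c.1, c.2)))
    obtain ⟨ws, hws, hiff⟩ := ih hcs'
    refine ⟨ws, hws, ?_⟩
    filter_upwards [hiff, (eventually_all_finite hcs).2 fun c _ => hσ (c.1 0)] with ε hε hεσ φ
    rw [← hε φ, Fin.exists_fin_succ_pi, exists_comm]
    refine exists_congr fun t => ?_
    let φ' : ((Fin k → A) × V) →ₛₗ[ε] 𝕜 :=
      (specializedForm ε t).comp (LinearMap.fst A _ _) + φ.comp (LinearMap.snd A _ _)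
    refine Iff.trans ?_ (helim ε (Set.forall_mem_image.2 hεσ) φ')
    simp only [Set.forall_mem_image, specializedForm_cons, add_assoc]
    rfl

/- Farkas–Minkowski–Weyl for a cone whose generators depend on the parameter `ε`. -/
theorem eventually_cone_iff_forall_nonneg
    (hsign : ∀ a, ∃ s, ∀ᶠ ε in l, SignType.sign (ε a) = s) {k : ℕ} {ι : Type*} [Fintype ι]
    (u : Fin k → ι → A) :
    ∃ ws : Set (ι → A), ws.Finite ∧ ∀ᶠ ε in l, ∀ z : ι → 𝕜,
      (∃ t : Fin k → 𝕜, (∀ i, 0 ≤ t i) ∧ ∀ j, ∑ i, ε (u i j) * t i = z j) ↔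
        ∀ w ∈ ws, 0 ≤ specializedForm ε z w := by
  classical
  obtain ⟨ws, hws, hiff⟩ := eventually_fourier_motzkin hsign (V := ι → A)
    ((Set.finite_range fun i => (Pi.single i 1, 0)).union
      ((Set.finite_range fun j => (fun i => u i j, -Pi.single j 1)).union
        (Set.finite_range fun j => (fun i => -u i j, Pi.single j 1))))
  refine ⟨ws, hws, ?_⟩
  filter_upwards [hiff] with ε hε z
  rw [← hε]
  refine exists_congr fun t => ?_
  simp only [Set.mem_union, or_imp, forall_and, Set.forall_mem_range, map_zero, map_neg,
    specializedForm_single, add_zero]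
  refine and_congr_right fun _ => ?_
  rw [← forall_and]
  refine forall_congr' fun j => ?_
  have hneg : specializedForm ε t (fun i => -u i j) = -specializedForm ε t (fun i => u i j) :=
    map_neg _ _
  rw [hneg, le_add_neg_iff_le, le_neg_add_iff_le, and_comm, ← le_antisymm_iff]
  rfl

end FourierMotzkin

section PolynomialForm

variable {r : ℕ}

theorem exists_abs_le_mul_of_mem_affineForms {l : ℕ × (Fin r → ℤ) → ℤ} (hl : l ∈ affineForms r)
    (K : ℕ) :
    ∃ K' : ℕ, ∀ n : ℕ, 0 < n → ∀ x : Fin r → ℤ, (∀ j, |x j| ≤ K * n) → |l (n, x)| ≤ K' * n := by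
  obtain ⟨a, b, c, h⟩ := hl
  refine ⟨a.natAbs + b.natAbs + ∑ j, (c j).natAbs * K, fun n hn x hx => ?_⟩
  have hn1 : (1 : ℤ) ≤ n := mod_cast hn
  have hb : |b| ≤ |b| * n := le_mul_of_one_le_right (abs_nonneg b) hn1
  have hc : |c ⬝ᵥ x| ≤ ∑ j, |c j| * (K * n) :=
    (abs_sum_le_sum_abs _ _).trans <| sum_le_sum fun j _ => by
      rw [abs_mul]
      exact mul_le_mul_of_nonneg_left (hx j) (abs_nonneg _)
  calc |l (n, x)| ≤ |a * n| + |b| + |c ⬝ᵥ x| := by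
        rw [h]
        exact abs_add_three _ _ _
    _ ≤ |a| * n + |b| * n + ∑ j, |c j| * (K * n) := by
        rw [abs_mul, Nat.abs_cast]
        gcongr
    _ = _ := by
        push_cast
        simp only [← mul_assoc, ← sum_mul, add_mul]

theorem specializedForm_C_mem_affineForms (c : Fin (r + 1) → ℤ) :
    (fun y : ℕ × (Fin r → ℤ) => specializedForm (evalRingHom (y.1 : ℤ)) (Fin.cons 1 y.2)
      fun j => C (c j)) ∈ affineForms r := by
  refine ⟨0, c 0, Matrix.vecTail c, fun y => ?_⟩
  simp only [specializedForm_cons, coe_evalRingHom, eval_C, mul_one, zero_mul, zero_add]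
  congr 1
  simp [specializedForm, Matrix.vecTail, dotProduct]

theorem nonneg_add_mul_eq_sum {n e : ℤ} {K : ℕ} (hn : 0 < n) (he : |e| ≤ K * n) (w : ℤ) :
    (if 0 ≤ e + n * w then (1 : ℚ) else 0) = ∑ q ∈ Icc (-K : ℤ) K,
      (if n * q ≤ e then 1 else 0) * (if e < n * (q + 1) then 1 else 0) *
        (if 0 ≤ q + w then 1 else 0) := by
  have hquot (q : ℤ) : e / n = q ↔ n * q ≤ e ∧ e < n * (q + 1) := by
    rw [Int.ediv_eq_iff_of_pos hn]
    constructor <;> rintro ⟨h₁, h₂⟩ <;> constructor <;> linarith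
  have hmem : e / n ∈ Icc (-K : ℤ) K := by
    obtain ⟨hlower, hupper⟩ := abs_le.1 he
    rw [mem_Icc, Int.le_ediv_iff_mul_le hn]
    exact ⟨by linarith, Int.ediv_le_of_le_mul hn hupper⟩
  have hsign : 0 ≤ e + n * w ↔ 0 ≤ e / n + w := by
    rw [← Int.add_mul_ediv_left _ _ hn.ne', Int.ediv_nonneg_iff_of_pos hn]
  have hterm (q : ℤ) : (if n * q ≤ e then (1 : ℚ) else 0) * (if e < n * (q + 1) then 1 else 0) *
      (if 0 ≤ q + w then 1 else 0) =
      if e / n = q then (if 0 ≤ q + w then 1 else 0) else 0 := by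
    simp only [hquot, ite_and, ite_mul, one_mul, zero_mul]
  simp only [hterm, sum_ite_eq, hmem, if_true, hsign]

theorem specializedForm_eq_add_mul_divX {ι : Type*} [Fintype ι] (n : ℤ) (z : ι → ℤ)
    (w : ι → ℤ[X]) :
    specializedForm (evalRingHom n) z w =
      specializedForm (evalRingHom n) z (fun j => C ((w j).coeff 0)) +
        n * specializedForm (evalRingHom n) z fun j => divX (w j) := by
  have hw : w = (fun j => C ((w j).coeff 0)) + (X : ℤ[X]) • fun j => divX (w j) := by
    ext1 j
    rw [Pi.add_apply, Pi.smul_apply, smul_eq_mul, add_comm, X_mul_divX_add]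
  conv_lhs => rw [hw]
  rw [map_add, map_smulₛₗ, coe_evalRingHom, eval_X, smul_eq_mul]

/- Dividing `e(x) + n w(x)`, where `e` has constant coefficients, by the parameter `n` lowers the
degree of the coefficients, and `⌊e(x) / n⌋` takes only finitely many values since `x = O(n)`. -/
theorem exists_mem_piecewiseQuasiPolynomials_eq_nonneg_specializedForm (K N : ℕ)
    {w : Fin (r + 1) → ℤ[X]} (hw : ∀ j, (w j).natDegree ≤ N) :
    ∃ f ∈ piecewiseQuasiPolynomials (affineForms r), ∀ n : ℕ, 0 < n → ∀ x : Fin r → ℤ,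
      (∀ j, |x j| ≤ K * n) → f (n, x) =
        if 0 ≤ specializedForm (evalRingHom (n : ℤ)) (Fin.cons 1 x) w then 1 else 0 := by
  induction N generalizing w with
  | zero =>
    obtain ⟨c, rfl⟩ : ∃ c : Fin (r + 1) → ℤ, w = fun j => C (c j) :=
      ⟨fun j => (w j).coeff 0, funext fun j => eq_C_of_natDegree_le_zero (hw j)⟩
    exact ⟨_, nonneg_mem_piecewiseQuasiPolynomials (specializedForm_C_mem_affineForms c),
      fun _ _ _ _ => rfl⟩
  | succ N ih =>
    have he := specializedForm_C_mem_affineForms fun j => (w j).coeff 0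
    obtain ⟨K', hK'⟩ := exists_abs_le_mul_of_mem_affineForms he K
    have hdeg (q : ℤ) (j) :
        (((Pi.single 0 (C q) : Fin (r + 1) → ℤ[X]) + fun j => divX (w j)) j).natDegree ≤ N := by
      rw [Pi.add_apply]
      apply natDegree_add_le_of_degree_le
      · rw [Pi.single_apply]
        split_ifs <;> simp
      · rw [natDegree_divX_eq_natDegree_tsub_one]
        exact Nat.sub_le_of_le_add (hw j)
    choose f hf hfw using fun q : ℤ => ih (hdeg q)
    have hquot (q : ℤ) := mul_mem
      (le_mem_piecewiseQuasiPolynomials (mul_fst_mem_affineForms q) he)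
      (lt_mem_piecewiseQuasiPolynomials one_mem_affineForms he (mul_fst_mem_affineForms (q + 1)))
    refine ⟨_, sum_mem fun q (_ : q ∈ Icc (-K' : ℤ) K') => mul_mem (hquot q) (hf q),
      fun n hn x hx => ?_⟩
    rw [specializedForm_eq_add_mul_divX,
      nonneg_add_mul_eq_sum (mod_cast hn) (hK' n hn x hx)]
    have hshift (q : ℤ) : specializedForm (evalRingHom (n : ℤ)) (Fin.cons 1 x)
        (Pi.single 0 (C q)) = q := by
      simp [specializedForm, Pi.single_apply, apply_ite]
    simp only [Finset.sum_apply, Pi.mul_apply, hfw _ n hn x hx, map_add, hshift, mul_comm _ (n : ℤ)]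

end PolynomialForm

section LatticePolytope

theorem mem_convexHull_range_iff_cons_one {𝕜 : Type*} [Field 𝕜] [LinearOrder 𝕜]
    [IsStrictOrderedRing 𝕜] {k r : ℕ} (v : Fin k → Fin r → 𝕜) (p : Fin r → 𝕜) :
    p ∈ convexHull 𝕜 (Set.range v) ↔ ∃ t : Fin k → 𝕜, (∀ i, 0 ≤ t i) ∧
      ∀ j, ∑ i, (Fin.cons 1 (v i) : Fin (r + 1) → 𝕜) j * t i =
        (Fin.cons 1 p : Fin (r + 1) → 𝕜) j := by
  have hsimplex : convexHull 𝕜 (Set.range v) =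
      Fintype.linearCombination 𝕜 v '' stdSimplex 𝕜 (Fin k) := by
    rw [← convexHull_rangle_single_eq_stdSimplex, LinearMap.image_convexHull, ← Set.range_comp]
    simp [Function.comp_def, Fintype.linearCombination_apply_single]
  simp only [hsimplex, Set.mem_image, stdSimplex, Set.mem_ofPred_eq, Fin.forall_fin_succ,
    Fin.cons_zero, Fin.cons_succ, mul_one, and_assoc, funext_iff, Fintype.linearCombination_apply,
    Finset.sum_apply, Pi.smul_apply, smul_eq_mul, mul_comm]

theorem eventually_mem_convexHull_iff_forall_nonneg {k r : ℕ} (P : Fin k → Fin r → ℤ[X]) :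
    ∃ ws : Set (Fin (r + 1) → ℤ[X]), ws.Finite ∧ ∀ᶠ n : ℕ in atTop, ∀ p : Fin r → ℤ,
      (fun j => (p j : ℝ)) ∈
          convexHull ℝ (Set.range fun i j => (((P i j).eval (n : ℤ) : ℤ) : ℝ)) ↔
        ∀ w ∈ ws, 0 ≤ specializedForm (evalRingHom (n : ℤ)) (Fin.cons 1 p) w := by
  let ε (n : ℕ) : ℤ[X] →+* ℝ := (Int.castRingHom ℝ).comp (evalRingHom (n : ℤ))
  have hsign (Q : ℤ[X]) : ∃ s, ∀ᶠ δ in map ε atTop, SignType.sign (δ Q) = s := by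
    obtain ⟨s, hs⟩ := exists_eventually_sign_aeval_natCast Q
    refine ⟨s, eventually_map.2 (hs.mono fun n hn => ?_)⟩
    rw [← hn]
    simp [ε, aeval_def, eval₂_eq_eval_map]
  obtain ⟨ws, hws, hiff⟩ := eventually_cone_iff_forall_nonneg hsign
    fun i => (Fin.cons 1 (P i) : Fin (r + 1) → ℤ[X])
  refine ⟨ws, hws, (eventually_map.1 hiff).mono fun n hn p => ?_⟩
  have hcast (w : Fin (r + 1) → ℤ[X]) : specializedForm (ε n) (Fin.cons 1 fun j => (p j : ℝ)) w =
      (specializedForm (evalRingHom (n : ℤ)) (Fin.cons 1 p) w : ℤ) := by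
    simp [specializedForm, ε, Fin.sum_univ_succ]
  simp only [← Int.cast_nonneg_iff (R := ℝ), ← hcast]
  rw [mem_convexHull_range_iff_cons_one, ← hn]
  simp [Fin.forall_fin_succ, ε]

theorem exists_abs_le_mul_of_mem_convexHull {k r : ℕ} (a b : Fin k → Fin r → ℤ) :
    ∃ K : ℕ, ∀ n : ℕ, 0 < n → ∀ p : Fin r → ℤ,
      (fun j => (p j : ℝ)) ∈ convexHull ℝ (Set.range fun i j => ((a i j * n + b i j : ℤ) : ℝ)) →
        ∀ j, |p j| ≤ K * n := by
  obtain ⟨K, hK⟩ := Finite.exists_le fun q : Fin k × Fin r =>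
    (a q.1 q.2).natAbs + (b q.1 q.2).natAbs
  refine ⟨K, fun n hn p hp j => ?_⟩
  have hvertex (i j) : |a i j * n + b i j| ≤ (K * n : ℤ) :=
    calc |a i j * n + b i j| ≤ |a i j * n| + |b i j| := abs_add_le _ _
      _ ≤ |a i j| * n + |b i j| * n := by
        rw [abs_mul, Nat.abs_cast]
        gcongr
        exact le_mul_of_one_le_right (abs_nonneg _) (mod_cast hn)
      _ = ((a i j).natAbs + (b i j).natAbs : ℕ) * n := by
        push_cast
        ring
      _ ≤ K * n := by
        gcongr
        exact hK (i, j)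
  have hbox : convexHull ℝ (Set.range fun i j => ((a i j * n + b i j : ℤ) : ℝ)) ⊆
      Set.Icc (fun _ => ((-(K * n) : ℤ) : ℝ)) (fun _ => ((K * n : ℤ) : ℝ)) := by
    refine convexHull_min ?_ (convex_Icc _ _)
    rintro _ ⟨i, rfl⟩
    exact ⟨fun j => Int.cast_le.2 (abs_le.1 (hvertex i j)).1,
      fun j => Int.cast_le.2 (abs_le.1 (hvertex i j)).2⟩
  exact abs_le.2 ⟨Int.cast_le.1 ((hbox hp).1 j), Int.cast_le.1 ((hbox hp).2 j)⟩

open Classical in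
theorem exists_mem_piecewiseQuasiPolynomials_eq_forall_nonneg_specializedForm {r : ℕ} (K : ℕ)
    {ws : Set (Fin (r + 1) → ℤ[X])} (hws : ws.Finite) :
    ∃ F ∈ piecewiseQuasiPolynomials (affineForms r), ∀ n : ℕ, 0 < n → ∀ x : Fin r → ℤ,
      (∀ j, |x j| ≤ K * n) → F (n, x) =
        if ∀ w ∈ ws, 0 ≤ specializedForm (evalRingHom (n : ℤ)) (Fin.cons 1 x) w then 1 else 0 := by
  choose f hf hfw using fun w : Fin (r + 1) → ℤ[X] =>
    exists_mem_piecewiseQuasiPolynomials_eq_nonneg_specializedForm K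
      (univ.sup fun j => (w j).natDegree) fun j =>
        le_sup (f := fun j => (w j).natDegree) (mem_univ j)
  refine ⟨∏ w ∈ hws.toFinset, f w, prod_mem fun w _ => hf w, fun n hn x hx => ?_⟩
  simp only [Finset.prod_apply, hfw _ n hn x hx, prod_boole, hws.mem_toFinset]

theorem card_lattice_points_mem_eventuallyQuasiPolynomials {k r : ℕ} (a b : Fin k → Fin r → ℤ) :
    (fun n : ℕ => (Nat.card {p : Fin r → ℤ | (fun j => (p j : ℝ)) ∈
      convexHull ℝ (Set.range fun i j => ((a i j * n + b i j : ℤ) : ℝ))} : ℚ)) ∈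
        eventuallyQuasiPolynomials := by
  classical
  obtain ⟨K, hK⟩ := exists_abs_le_mul_of_mem_convexHull a b
  obtain ⟨ws, hws, hmem⟩ :=
    eventually_mem_convexHull_iff_forall_nonneg fun i j => C (a i j) * X + C (b i j)
  obtain ⟨F, hF, hFws⟩ :=
    exists_mem_piecewiseQuasiPolynomials_eq_forall_nonneg_specializedForm K hws
  refine eventuallyQuasiPolynomials_congr (sum_box_mem_eventuallyQuasiPolynomials K hF) ?_
  filter_upwards [hmem, eventually_gt_atTop 0] with n hn hn0
  simp only [eval_add, eval_mul, eval_C, eval_X] at hn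
  have hbox (p : Fin r → ℤ) :
      p ∈ Fintype.piFinset (fun _ : Fin r => Ico (-(K * n : ℤ)) (K * n + 1)) ↔
        ∀ j, |p j| ≤ K * n := by
    simp only [Fintype.mem_piFinset, mem_Ico, Int.lt_add_one_iff, abs_le]
  rw [sum_congr rfl fun p hp => hFws n hn0 p ((hbox p).1 hp), sum_boole]
  refine congrArg _ (Nat.subtype_card _ fun p => ?_)
  rw [mem_filter, hbox, ← hn p]
  exact and_iff_right_of_imp (hK n hn0 p)

end LatticePolytope

end LatticePointCount

/-- Chen–Li–Sam / generalized Ehrhart: let `N_n ⊆ ℝ^r` be the convex hull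
of lattice points `v_i(n) ∈ ℤ^r` whose coordinates are quasi-linear in `n` (linear on
each residue class mod some `M`).  Then the lattice-point count `|N_n ∩ ℤ^r|` is a
quasi-polynomial in `n` for all sufficiently large `n`. -/
theorem lattice_point_count_quasi_polynomial
    (r k : ℕ) (v : Fin k → ℕ → Fin r → ℤ)
    (M : ℕ) (hM : 0 < M)
    (hql : ∀ (i : Fin k) (j : Fin r), ∀ ρ < M, ∃ a b : ℤ,
      ∀ n : ℕ, v i (n * M + ρ) j = a * n + b)
    (count : ℕ → ℕ)
    (hcount : ∀ n, count n =
      Nat.card {p : Fin r → ℤ |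
        (fun j => (p j : ℝ)) ∈
          convexHull ℝ (Set.range fun i => fun j => (v i n j : ℝ))}) :
    ∃ M' : ℕ, 0 < M' ∧ ∃ N₀ : ℕ, ∀ ρ < M', ∃ P : Polynomial ℚ,
      ∀ n : ℕ, N₀ ≤ n → (count (n * M' + ρ) : ℚ) = P.eval (n : ℚ) := by
  choose! a b hab using hql
  refine LatticePointCount.exists_polynomial_on_residues (f := fun n => count n)
    (LatticePointCount.mem_eventuallyQuasiPolynomials_of_residues hM fun ρ hρ => ?_)
  simpa only [hcount, hab _ _ ρ hρ] using
    LatticePointCount.card_lattice_points_mem_eventuallyQuasiPolynomials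
      (fun i j => a i j ρ) fun i j => b i j ρ
end
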